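/- One has lim_{n→∞} (log|ℓ_n|)/n = lim_{n→∞} (log|ℓ̃_n|)/n = log μ2, where μ2 is the unique root of μ^3+2368μ^2−752μ−16 lying in the interval (0.337, 0.338) (numerically log μ2 = −1.08607936…). -/

import Mathlib

noncomputable section

open Filter


/-- `a₀(n)` from recursion (1). -/
def a0 (x : ℚ) : ℚ := 41218*x^3 - 48459*x^2 + 20010*x - 2871

/-- `a₁(n)` from recursion (1). -/
def a1 (x : ℚ) : ℚ := 2*(48802112*x^9 + 89030880*x^8 + 36002654*x^7 - 24317344*x^6
  - 19538418*x^5 + 1311365*x^4 + 3790503*x^3 + 460056*x^2 - 271701*x - 60291)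

/-- `a₂(n)` from recursion (1). -/
def a2 (x : ℚ) : ℚ := 3874492*x^8 - 2617900*x^7 - 3144314*x^6 + 2947148*x^5
  + 647130*x^4 - 1182926*x^3 + 115771*x^2 + 170716*x - 44541

/-- The third-order difference equation (1), imposed for all integers `n ≥ 2`. -/
def Rec1 (y : ℕ → ℚ) : Prop := ∀ n : ℕ, 2 ≤ n →
  ((n : ℚ) + 1)^6 * a0 (n : ℚ) * y (n+1) + a1 (n : ℚ) * y n
    - 4*(2*(n : ℚ) - 1) * a2 (n : ℚ) * y (n-1)
    - 4*((n : ℚ) - 1)^4*(2*(n : ℚ) - 1)*(2*(n : ℚ) - 3) * a0 ((n : ℚ) + 1) * y (n-2) = 0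

/-- The (real) value of the Riemann zeta function at a natural number argument. -/
def zetaRe (s : ℕ) : ℝ := (riemannZeta s).re

/-- The cubic `c(n)` occurring in the recursion for the linear forms. -/
def cC (n : ℝ) : ℝ := 41218*n^3 + 172113*n^2 + 240582*n + 112558

/-- Middle coefficients of the recursion for the linear forms. -/
def bB1 (n : ℝ) : ℝ := -2*(48802112*n^9 + 789407136*n^8 + 5639012702*n^7 + 23351915204*n^6
  + 61795716198*n^5 + 108398618199*n^4 + 126080841295*n^3 + 93794477946*n^2
  + 40508900959*n + 7741215265)

def bB2 (n : ℝ) : ℝ := -2*(n+2)*(3874492*n^8 + 64609772*n^7 + 467449390*n^6 + 1914997100*n^5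
  + 4854959850*n^4 + 7794497470*n^3 + 7734655711*n^2 + 4336014520*n + 1051310919)

/-! Coefficients of the certificate polynomial. -/

def xc0 (n : ℝ) : ℝ :=
  263960072*n^19 + 8236800144*n^18 + 120346738482*n^17 + 1092492715634*n^16 +
    6892630984680*n^15 + 32014509667092*n^14 + 113043947726940*n^13 + 308574286234068*n^12 +
    654218951973464*n^11 + 1068073123806588*n^10 + 1302088233553946*n^9 + 1084011262818970*n^8
    + 407019839563280*n^7 - 360108643691456*n^6 - 768691920363392*n^5 - 698921107778240*n^4 -
    395428992735488*n^3 - 143036230368256*n^2 - 30471243751936*n - 2915872554496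

def xc1 (n : ℝ) : ℝ :=
  3545572360*n^18 + 108768928064*n^17 + 1566601630226*n^16 + 14071316799154*n^15 +
    88291552266900*n^14 + 410784268319168*n^13 + 1467920856355366*n^12 + 4116997319116924*n^11
    + 9180472065335946*n^10 + 16383911507028690*n^9 + 23432210639505490*n^8 +
    26758257724072936*n^7 + 24177080164457672*n^6 + 17013856710767616*n^5 +
    9094420667873440*n^4 + 3549212097738368*n^3 + 947027604003200*n^2 + 152873959328256*n +
    11079984727040

def xc2 (n : ℝ) : ℝ :=
  17091950496*n^17 + 499902117152*n^16 + 6847409447276*n^15 + 58327469435928*n^14 +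
    345980748059520*n^13 + 1516233526986816*n^12 + 5082158312006860*n^11 +
    13303601351393048*n^10 + 27524567187017174*n^9 + 45246957576160088*n^8 +
    59068192789835022*n^7 + 60851627966966172*n^6 + 48828164183168624*n^5 +
    29849795351904416*n^4 + 13410170897085536*n^3 + 4165860404724928*n^2 + 797448566453760*n +
    70643635467264

def xc3 (n : ℝ) : ℝ :=
  44991260592*n^16 + 1242092300768*n^15 + 16000518811048*n^14 + 127649304008790*n^13 +
    705792624921889*n^12 + 2867427517304302*n^11 + 8852951683536148*n^10 +
    21183792551529734*n^9 + 39693909906964411*n^8 + 58421026558295574*n^7 +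
    67289700850567028*n^6 + 59992470514420124*n^5 + 40566872725819736*n^4 +
    20100738889429952*n^3 + 6877762338863872*n^2 + 1450590562121664*n + 141902273777280

def xc4 (n : ℝ) : ℝ :=
  75155417352*n^15 + 1947027637416*n^14 + 23432182780646*n^13 + 173766130595269*n^12 +
    887904741404355*n^11 + 3311127851614962*n^10 + 9308281992415844*n^9 + 20084452466420907*n^8
    + 33530542951129061*n^7 + 43304445854213186*n^6 + 42902419115209182*n^5 +
    32011467325157004*n^4 + 17407721582744320*n^3 + 6510595915675776*n^2 + 1496787057059552*n +
    159362053182912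

def xc5 (n : ℝ) : ℝ :=
  85186394704*n^14 + 2061362912674*n^13 + 23051912156761*n^12 + 157896961826863*n^11 +
    740056071632215*n^10 + 2510647453657912*n^9 + 6357400414050170*n^8 + 12205615832263223*n^7
    + 17852945309971916*n^6 + 19795910550930734*n^5 + 16378281096324056*n^4 +
    9803103576502940*n^3 + 4011998316259560*n^2 + 1004705540604336*n + 116122850019168

def xc6 (n : ℝ) : ℝ :=
  67257512718*n^13 + 1513794029433*n^12 + 15649873437993*n^11 + 98398691570981*n^10 +
    419813387057141*n^9 + 1283458466593866*n^8 + 2892713644678556*n^7 + 4866609467133058*n^6 +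
    6111484006958498*n^5 + 5658076676938428*n^4 + 3753633590206144*n^3 + 1689732010903804*n^2 +
    462589415373392*n + 58162079957168

def xc7 (n : ℝ) : ℝ :=
  36798729694*n^12 + 767378145265*n^11 + 7297551548081*n^10 + 41849870190327*n^9 +
    161203871015017*n^8 + 439425555102546*n^7 + 869250932074872*n^6 + 1257382904269778*n^5 +
    1320095986888062*n^4 + 981072690045396*n^3 + 489948362912264*n^2 + 147635782399900*n +
    20300796581144

def xc8 (n : ℝ) : ℝ :=
  13265065286*n^11 + 255588785877*n^10 + 2226647554969*n^9 + 11578455251767*n^8 +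
    39933824588417*n^7 + 95931261000792*n^6 + 163807487395720*n^5 + 198845168994216*n^4 +
    168183978136088*n^3 + 94407898827380*n^2 + 31658044686802*n + 4804997987766

def xc9 (n : ℝ) : ℝ :=
  2586718026*n^10 + 46273588777*n^9 + 370507523578*n^8 + 1748641169569*n^7 + 5387380494750*n^6
    + 11322056871484*n^5 + 16438604375288*n^4 + 16282958451830*n^3 + 10531572318844*n^2 +
    4016748862812*n + 686094396522

def xc10 (n : ℝ) : ℝ :=
  -83095488*n^9 - 943321832*n^8 - 3742226772*n^7 - 2620461870*n^6 + 28099785642*n^5 +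
    111848941585*n^4 + 203403926031*n^3 + 205702512659*n^2 + 112030144409*n + 25741322964

def xc11 (n : ℝ) : ℝ :=
  -214910652*n^8 - 2991683762*n^7 - 17980305810*n^6 - 60911295258*n^5 - 127168847019*n^4 -
    167495533221*n^3 - 135862176366*n^2 - 62016950659*n - 12186862569

def xc12 (n : ℝ) : ℝ :=
  -68669188*n^7 - 868985726*n^6 - 4650711814*n^5 - 13639058867*n^4 - 23665238919*n^3 -
    24291175643*n^2 - 13656637449*n - 3243612946

def xc13 (n : ℝ) : ℝ :=
  -12695144*n^6 - 143896494*n^5 - 670080901*n^4 - 1639285263*n^3 - 2220498357*n^2 -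
    1578491285*n - 459974452

def xc14 (n : ℝ) : ℝ :=
  -1483848*n^5 - 14851848*n^4 - 58640562*n^3 - 113951304*n^2 - 108789306*n - 40785912

def xc15 (n : ℝ) : ℝ :=
  -82436*n^4 - 715188*n^3 - 2304225*n^2 - 3258328*n - 1699413

/-- The polynomial part of the creative-telescoping certificate. -/
def xC (n t : ℝ) : ℝ :=
  xc0 n * t^0
  + xc1 n * t^1
  + xc2 n * t^2
  + xc3 n * t^3
  + xc4 n * t^4
  + xc5 n * t^5
  + xc6 n * t^6
  + xc7 n * t^7
  + xc8 n * t^8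
  + xc9 n * t^9
  + xc10 n * t^10
  + xc11 n * t^11
  + xc12 n * t^12
  + xc13 n * t^13
  + xc14 n * t^14
  + xc15 n * t^15

set_option maxHeartbeats 4000000 in
set_option maxRecDepth 100000 in
theorem cert_id (n t : ℝ) :
    2*(2*n+3)*(n+1)*cC (n+1) * (2*t+n) * ((t+n+1)*(t+n+2)*(t+n+3))^7
    + bB1 n * (2*t+n+1) * (t-n-1) * (t+2*n+1)*(t+2*n+2) * ((t+n+2)*(t+n+3))^7
    + bB2 n * (n+2)^4 * (2*t+n+2) * (t-n-1)*(t-n-2)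
        * (t+2*n+1)*(t+2*n+2)*(t+2*n+3)*(t+2*n+4) * (t+n+3)^7
    + (n+2)*(n+3)^5*cC n * ((n+2)*(n+3))^4 * (2*t+n+3) * (t-n-1)*(t-n-2)*(t-n-3)
        * (t+2*n+1)*(t+2*n+2)*(t+2*n+3)*(t+2*n+4)*(t+2*n+5)*(t+2*n+6)
    = t^7*(t+2*n+1) * xC n (t+1) - (t-n-1)*(t+n+3)^7 * xC n t := by
  unfold xC cC bB1 bB2 xc0 xc1 xc2 xc3 xc4 xc5 xc6 xc7 xc8 xc9 xc10 xc11 xc12 xc13 xc14 xc15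
  ring

/-- Coefficients at the ends of the recursion for the linear forms. -/
def bB0 (n : ℝ) : ℝ := 2*(2*n+3)*(n+1)^5*cC (n+1)

def bB3 (n : ℝ) : ℝ := (n+2)*(n+3)^5*cC n

/-- The recursion satisfied by the linear forms. -/
def RecB (y : ℕ → ℝ) : Prop := ∀ n : ℕ,
  bB3 n * y (n+3) + bB2 n * y (n+2) + bB1 n * y (n+1) + bB0 n * y n = 0

theorem dsucc (n s : ℕ) : ((s.descFactorial (n+1) : ℕ) : ℝ)
    = ((s : ℝ) - n) * (s.descFactorial n : ℕ) := by
  rw [Nat.descFactorial_succ]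
  rcases le_or_gt n s with h | h
  · push_cast [h]; ring
  · rw [Nat.descFactorial_eq_zero_iff_lt.mpr h]; simp

theorem dshift (n s : ℕ) : ((s : ℝ) + 1 - n) * ((s+1).descFactorial n : ℕ)
    = ((s : ℝ) + 1) * (s.descFactorial n : ℕ) := by
  have h := Nat.succ_descFactorial s n
  rcases le_or_gt n (s+1) with h' | h'
  · have := congrArg (Nat.cast : ℕ → ℝ) h
    push_cast [h'] at this
    exact this
  · rw [Nat.descFactorial_eq_zero_iff_lt.mpr h', Nat.descFactorial_eq_zero_iff_lt.mpr (by omega)]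
    simp

/-- The rational summand, up to the very-well-poised factor; `t = s+1`. -/
def Q (n s : ℕ) : ℝ := (n.factorial : ℝ)^4 * (s.descFactorial n : ℕ) * ((s+2*n+1).factorial : ℕ)
  * (s.factorial : ℝ)^6 / ((s+n+1).factorial : ℝ)^7

def R (n s : ℕ) : ℝ := (2*((s:ℝ)+1)+n) * Q n s

theorem fact_cast (m : ℕ) : ((m+1).factorial : ℝ) = ((m:ℝ)+1) * (m.factorial : ℝ) := by
  rw [Nat.factorial_succ]; push_cast; ring

theorem Q_succ (n s : ℕ) : Q (n+1) s = Q n s * (((n:ℝ)+1)^4 * ((s:ℝ)-n) * ((s:ℝ)+1+2*n+1)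
    * ((s:ℝ)+1+2*n+2)) * (1 / ((s:ℝ)+1+n+1)^7) := by
  unfold Q
  have h1 : s + 2*(n+1) + 1 = ((s+2*n+1)+1)+1 := by ring
  have h2 : s + (n+1) + 1 = (s+n+1)+1 := by ring
  rw [h1, h2, fact_cast (s+2*n+1+1), fact_cast (s+2*n+1), fact_cast (s+n+1), dsucc, fact_cast n]
  have h3 : ((s+n+1).factorial : ℝ) ≠ 0 := by positivity
  have h4 : ((s:ℝ)+1+n+1) ≠ 0 := by positivity
  push_cast
  have h5 : ((s:ℝ)+n+1+1) ≠ 0 := by positivity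
  rw [show (s:ℝ)+1+n+1 = s+n+1+1 by ring]
  field_simp
  ring

theorem Q_shift (n s : ℕ) : ((s:ℝ)+1-n) * Q n (s+1)
    = Q n s * (((s:ℝ)+1)^7 * ((s:ℝ)+1+2*n+1)) * (1 / ((s:ℝ)+1+n+1)^7) := by
  unfold Q
  have h1 : s + 1 + 2*n + 1 = (s+2*n+1)+1 := by ring
  have h2 : s + 1 + n + 1 = (s+n+1)+1 := by ring
  rw [h1, h2, fact_cast (s+2*n+1), fact_cast (s+n+1), fact_cast s]
  have h3 : ((s+n+1).factorial : ℝ) ≠ 0 := by positivity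
  push_cast
  have h5 : ((s:ℝ)+n+1+1) ≠ 0 := by positivity
  rw [show (s:ℝ)+1+n+1 = s+n+1+1 by ring]
  have h := dshift n s
  field_simp
  linear_combination (s + 1 + 1 + 2*n) * h

/-- The telescoping certificate. -/
def G (n s : ℕ) : ℝ := Q n s * ((s:ℝ)-n) * ((n:ℝ)+1)^4 * xC n ((s:ℝ)+1)
  * (1 / ((s:ℝ)+1+n+1)^7) * (1 / ((s:ℝ)+1+n+2)^7)

theorem tele (n s : ℕ) : bB3 n * R (n+3) s + bB2 n * R (n+2) s + bB1 n * R (n+1) s + bB0 n * R n s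
    = G n (s+1) - G n s := by
  have c := cert_id n ((s:ℝ)+1)
  have q1 := Q_succ n s
  have q2 := Q_succ (n+1) s
  have q3 := Q_succ (n+2) s
  have q' := Q_shift n s
  unfold R G bB0 bB3
  rw [show n+3 = n+2+1 by ring, q3, show n+2 = n+1+1 by ring, q2, q1]
  rw [mul_pow, mul_pow, mul_pow] at c
  have ha : ((s:ℝ)+1+n+1)^7 * (1 / ((s:ℝ)+1+n+1)^7) = 1 := by
    have : ((s:ℝ)+1+n+1) ≠ 0 := by positivity
    field_simp
  have hb : ((s:ℝ)+1+n+2)^7 * (1 / ((s:ℝ)+1+n+2)^7) = 1 := by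
    have : ((s:ℝ)+1+n+2) ≠ 0 := by positivity
    field_simp
  have hc : ((s:ℝ)+1+n+3)^7 * (1 / ((s:ℝ)+1+n+3)^7) = 1 := by
    have : ((s:ℝ)+1+n+3) ≠ 0 := by positivity
    field_simp
  push_cast at *
  have e1 : (s:ℝ)+1+(n+1)+1 = s+1+n+2 := by ring
  have e2 : (s:ℝ)+1+(n+2)+1 = s+1+n+3 := by ring
  have e2' : (s:ℝ)+1+(n+1+1)+1 = s+1+n+3 := by ring
  have e3 : (s:ℝ)+1+1+n+1 = s+1+n+2 := by ring
  have e4 : (s:ℝ)+1+1+n+2 = s+1+n+3 := by ring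
  rw [e1, e2', e3, e4]
  generalize ((s:ℝ)+1+n+1)^7 = A at *
  generalize ((s:ℝ)+1+n+2)^7 = B at *
  generalize ((s:ℝ)+1+n+3)^7 = C at *
  generalize 1/A = a at *
  generalize 1/B = b at *
  generalize 1/C = d at *
  generalize xC n ((s:ℝ)+1+1) = x1 at *
  generalize xC n ((s:ℝ)+1) = x0 at *
  generalize cC n = c0 at *
  generalize cC (n+1) = c1 at *
  generalize bB1 n = b1 at *
  generalize bB2 n = b2 at *
  have hab : A * a * (B * b) * (C * d) = 1 := by rw [ha, hb, hc]; ring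
  have hbc : (B * b) * (C * d) = 1 := by rw [hb, hc]; ring
  generalize Q n s = z at *
  generalize Q n (s+1) = z' at *
  generalize (s:ℝ) = t at *
  generalize (n:ℝ) = m at *
  linear_combination z*(m+1)^4*a*b*d*c
    - z * 2*(2*m+3)*(m+1)^5*c1*(2*(t+1)+m) * hab
    - b1 * (2*(t+1)+m+1) * z * (m+1)^4*(t-m)*(t+1+2*m+1)*(t+1+2*m+2)*a * hbc
    - b2 * (m+2)^4 * (2*(t+1)+m+2) * z * (m+1)^4*(t-m)*(t-m-1)*(t+1+2*m+1)*(t+1+2*m+2)*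
      (t+1+2*m+3)*(t+1+2*m+4)*a*b * hc
    - z * (t-m) * (m+1)^4 * x0 * a * b * hc
    - (m+1)^4 * x1 * b * d * q'

theorem Q_nonneg (n s : ℕ) : 0 ≤ Q n s := by unfold Q; positivity

theorem R_nonneg (n s : ℕ) : 0 ≤ R n s := mul_nonneg (by positivity) (Q_nonneg n s)

theorem Q_zero_of_lt {n s : ℕ} (h : s < n) : Q n s = 0 := by
  unfold Q; rw [Nat.descFactorial_eq_zero_iff_lt.mpr h]; simp

theorem R_diag_pos (n : ℕ) : 0 < R n n := by
  unfold R Q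
  rw [Nat.descFactorial_self]
  positivity

theorem R_zero (s : ℕ) : R 0 s = 2 * (1 / ((s:ℝ)+1)^5) := by
  unfold R Q
  simp only [Nat.descFactorial_zero, Nat.factorial_zero, mul_zero, add_zero]
  rw [fact_cast s]
  have h : (s.factorial : ℝ) ≠ 0 := by positivity
  have h' : (s:ℝ)+1 ≠ 0 := by positivity
  push_cast
  field_simp
  ring

theorem R_succ_le (n s : ℕ) : R (n+1) s ≤ (1/2) * R n s := by
  rcases lt_or_ge s n with h | h
  · unfold R; rw [Q_zero_of_lt h, Q_zero_of_lt (show s < n+1 by omega)]; simp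
  have hs : (n:ℝ) ≤ s := by exact_mod_cast h
  have hn : (0:ℝ) ≤ n := by positivity
  unfold R
  rw [Q_succ]
  set x : ℝ := (s:ℝ)+1+n+1 with hx
  have hx0 : 0 < x := by rw [hx]; positivity
  have hs0 : 0 ≤ (s:ℝ) - n := by linarith
  have key : (2*((s:ℝ)+1)+(n+1)) * (((n:ℝ)+1)^4 * ((s:ℝ)-n) * ((s:ℝ)+1+2*n+1)
      * ((s:ℝ)+1+2*n+2)) ≤ (2*(2*((s:ℝ)+1)+n)) * ((x/2)^4 * x * (2*x) * (2*x)) := by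
    gcongr <;> linarith
  have hq := Q_nonneg n s
  push_cast
  calc (2*((s:ℝ)+1)+(n+1)) * (Q n s * (((n:ℝ)+1)^4 * ((s:ℝ)-n) * ((s:ℝ)+1+2*n+1)
      * ((s:ℝ)+1+2*n+2)) * (1/x^7))
      = ((2*((s:ℝ)+1)+(n+1)) * (((n:ℝ)+1)^4 * ((s:ℝ)-n) * ((s:ℝ)+1+2*n+1)
      * ((s:ℝ)+1+2*n+2))) * (Q n s * (1/x^7)) := by ring
    _ ≤ ((2*(2*((s:ℝ)+1)+n)) * ((x/2)^4 * x * (2*x) * (2*x))) * (Q n s * (1/x^7)) := by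
        gcongr
    _ = 1/2 * ((2*((s:ℝ)+1)+n) * Q n s) := by
        field_simp

theorem R_le (n s : ℕ) : R n s ≤ 2 * (1 / ((s:ℝ)+1)^5) := by
  induction n with
  | zero => exact (R_zero s).le
  | succ n ih => have := R_succ_le n s; have := R_nonneg n s; linarith

theorem summable_inv (k : ℕ) (hk : 1 < k) : Summable (fun s : ℕ => 1 / ((s:ℝ)+1)^k) := by
  have := (summable_nat_add_iff (f := fun s : ℕ => 1 / (s:ℝ)^k) 1).mpr
    (Real.summable_one_div_nat_pow.mpr hk)
  simpa using this

theorem R_summable (n : ℕ) : Summable (R n) :=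
  Summable.of_nonneg_of_le (R_nonneg n) (R_le n) ((summable_inv 5 (by norm_num)).mul_left 2)

theorem zeta_hasSum (k : ℕ) (hk : 1 < k) : HasSum (fun s : ℕ => 1 / ((s:ℝ)+1)^k) (zetaRe k) := by
  have h := zeta_nat_eq_tsum_of_gt_one hk
  have h2 : zetaRe k = ∑' n : ℕ, 1 / (n:ℝ)^k := by
    unfold zetaRe
    rw [h, ← Complex.ofReal_re (∑' n : ℕ, 1 / (n:ℝ)^k)]
    push_cast
    rfl
  rw [h2, (Real.summable_one_div_nat_pow.mpr hk).tsum_eq_zero_add]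
  have := (summable_inv k hk).hasSum
  have hk0 : k ≠ 0 := by omega
  simpa [hk0] using this

/-- The linear forms in `1, ζ(3), ζ(5)`. -/
def r (n : ℕ) : ℝ := ∑' s, R n s

theorem r_pos (n : ℕ) : 0 < r n := (R_summable n).tsum_pos (R_nonneg n) n (R_diag_pos n)

theorem r_succ_le (n : ℕ) : r (n+1) ≤ (1/2) * r n := by
  unfold r
  rw [← tsum_mul_left]
  exact (R_summable (n+1)).tsum_le_tsum (R_succ_le n) ((R_summable n).mul_left _)

theorem tsum_tele (f H : ℕ → ℝ) (hf : Summable f) (hH : Tendsto H atTop (nhds 0))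
    (h : ∀ s, f s = H (s+1) - H s) : ∑' s, f s = - H 0 := by
  have h1 := hf.hasSum.tendsto_sum_nat
  have h2 : ∀ N, ∑ i ∈ Finset.range N, f i = H N - H 0 := by
    intro N
    simp_rw [h]
    exact Finset.sum_range_sub H N
  simp_rw [h2] at h1
  have h3 : Tendsto (fun N => H N - H 0) atTop (nhds (0 - H 0)) := hH.sub_const _
  have := tendsto_nhds_unique h1 h3
  linarith

theorem tendsto_inv1 : Tendsto (fun s : ℕ => 1 / ((s:ℝ)+1)) atTop (nhds 0) :=
  tendsto_one_div_add_atTop_nhds_zero_nat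

theorem tendsto_inv2 : Tendsto (fun s : ℕ => 1 / ((s:ℝ)+2)) atTop (nhds 0) := by
  have := tendsto_inv1.comp (tendsto_add_atTop_nat 1)
  refine this.congr ?_
  intro s
  simp only [Function.comp]
  push_cast
  ring_nf

theorem xC_bound (n : ℝ) : ∃ K : ℝ, ∀ t : ℝ, 1 ≤ t → |xC n t| ≤ K * t^15 := by
  have h : ∀ (c : ℝ) (k : ℕ) (t : ℝ), k ≤ 15 → 1 ≤ t → |c * t^k| ≤ |c| * t^15 := by
    intro c k t hk ht
    rw [abs_mul, abs_of_nonneg (by positivity : 0 ≤ t^k)]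
    gcongr
  have h2 : ∀ f g : ℝ → ℝ, (∃ K : ℝ, ∀ t : ℝ, 1 ≤ t → |f t| ≤ K * t^15) →
     (∃ K : ℝ, ∀ t : ℝ, 1 ≤ t → |g t| ≤ K * t^15) →
     ∃ K : ℝ, ∀ t : ℝ, 1 ≤ t → |f t + g t| ≤ K * t^15 := by
    rintro f g ⟨K, hK⟩ ⟨K', hK'⟩
    refine ⟨K + K', fun t ht => ?_⟩
    have := abs_add_le (f t) (g t)
    have := hK t ht
    have := hK' t ht
    linarith
  have h3 : ∀ (c : ℝ) (k : ℕ), k ≤ 15 → ∃ K : ℝ, ∀ t : ℝ, 1 ≤ t → |c * t^k| ≤ K * t^15 :=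
    fun c k hk => ⟨|c|, fun t ht => h c k t hk ht⟩
  unfold xC
  repeat' apply h2
  all_goals exact h3 _ _ (by norm_num)

theorem G_tendsto (n : ℕ) : Tendsto (G n) atTop (nhds 0) := by
  obtain ⟨K, hK⟩ := xC_bound n
  have hK0 : 0 ≤ K := by
    have := hK 1 le_rfl
    have h0 := abs_nonneg (xC n 1)
    linarith
  have hb : ∀ s : ℕ, |G n s| ≤ (2 * ((n:ℝ)+1)^4 * K) * (1 / ((s:ℝ)+1)) := by
    intro s
    have hx := hK ((s:ℝ)+1) (by linarith [(Nat.cast_nonneg s : (0:ℝ) ≤ s)])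
    have hR := R_le n s
    have hq := Q_nonneg n s
    unfold R at hR
    set t : ℝ := (s:ℝ)+1 with ht
    have hs0 : (0:ℝ) ≤ s := Nat.cast_nonneg s
    have hn0 : (0:ℝ) ≤ n := Nat.cast_nonneg n
    have ht1 : 1 ≤ t := by linarith
    have hQ : Q n s ≤ 2 * (1/t^5) / t := by
      rw [le_div_iff₀ (by linarith)]
      have : Q n s * t ≤ (2*t+n) * Q n s := by nlinarith
      linarith
    have hd : |(s:ℝ) - n| ≤ t+n+1 := by
      rw [abs_le]; constructor <;> linarith
    have hG : |G n s| = Q n s * |(s:ℝ)-n| * ((n:ℝ)+1)^4 * |xC n t| * (1/(t+n+1)^7)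
        * (1/(t+n+2)^7) := by
      unfold G
      rw [abs_mul, abs_mul, abs_mul, abs_mul, abs_mul, abs_of_nonneg hq,
        abs_of_nonneg (by positivity : 0 ≤ ((n:ℝ)+1)^4),
        abs_of_nonneg (by positivity : (0:ℝ) ≤ (1/(t+n+1)^7)),
        abs_of_nonneg (by positivity : (0:ℝ) ≤ (1/(t+n+2)^7))]
    rw [hG]
    have e : (1/(t+n+1)^7) * (1/(t+n+2)^7) ≤ 1/(t+n+1) * (1/t^6) * (1/t^7) := by
      have e1 : 1/(t+n+1)^7 = 1/(t+n+1) * (1/(t+n+1)^6) := by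
        rw [div_mul_div_comm, one_mul, ← pow_succ']
      rw [e1]
      gcongr <;> linarith
    calc Q n s * |(s:ℝ)-n| * ((n:ℝ)+1)^4 * |xC n t| * (1/(t+n+1)^7) * (1/(t+n+2)^7)
        = (Q n s * |(s:ℝ)-n| * ((n:ℝ)+1)^4 * |xC n t|) * ((1/(t+n+1)^7) * (1/(t+n+2)^7)) := by ring
      _ ≤ (2 * (1/t^5) / t * (t+n+1) * ((n:ℝ)+1)^4 * (K * t^15)) *
          (1/(t+n+1) * (1/t^6) * (1/t^7)) := by
          gcongr
      _ = (2 * ((n:ℝ)+1)^4 * K) * (1 / t^4) := by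
          have : t + n + 1 ≠ 0 := by positivity
          have : t ≠ 0 := by positivity
          field_simp
      _ ≤ (2 * ((n:ℝ)+1)^4 * K) * (1 / t) := by
          gcongr
          exact le_self_pow₀ ht1 (by norm_num)
  rw [tendsto_zero_iff_abs_tendsto_zero]
  refine squeeze_zero (fun s => abs_nonneg _) hb ?_
  simpa using tendsto_inv1.const_mul (2 * ((n:ℝ)+1)^4 * K)

theorem G_zero (n : ℕ) : G n 0 = 0 := by
  unfold G
  rcases Nat.eq_zero_or_pos n with h | h
  · subst h; simp
  · rw [Q_zero_of_lt h]; simp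

theorem r_rec : RecB r := by
  intro n
  have s0 := (R_summable n).mul_left (bB0 n)
  have s1 := (R_summable (n+1)).mul_left (bB1 n)
  have s2 := (R_summable (n+2)).mul_left (bB2 n)
  have s3 := (R_summable (n+3)).mul_left (bB3 n)
  have h := tsum_tele (fun s => bB3 n * R (n+3) s + bB2 n * R (n+2) s + bB1 n * R (n+1) s
    + bB0 n * R n s) (G n) (((s3.add s2).add s1).add s0) (G_tendsto n) (tele n)
  rw [G_zero, ((s3.add s2).add s1).tsum_add s0, (s3.add s2).tsum_add s1, s3.tsum_add s2,
    tsum_mul_left, tsum_mul_left, tsum_mul_left, tsum_mul_left] at h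
  unfold r
  simpa using h

theorem r_zero : r 0 = 2 * zetaRe 5 := by
  unfold r
  simp_rw [R_zero]
  rw [tsum_mul_left, (zeta_hasSum 5 (by norm_num)).tsum_eq]

theorem r_form (n : ℕ) (a b : ℝ) (H : ℕ → ℝ) (hH : Tendsto H atTop (nhds 0))
    (h : ∀ s : ℕ, R n s = a * (1/((s:ℝ)+1)^5) + b * (1/((s:ℝ)+1)^3) + (H (s+1) - H s)) :
    r n = a * zetaRe 5 + b * zetaRe 3 - H 0 := by
  have h5 := (zeta_hasSum 5 (by norm_num)).mul_left a
  have h3 := (zeta_hasSum 3 (by norm_num)).mul_left b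
  have hs := h5.add h3
  have hd := (R_summable n).hasSum.sub hs
  have := tsum_tele _ H hd.summable hH (fun s => by rw [h s]; ring)
  rw [hd.tsum_eq] at this
  unfold r
  linarith

theorem R_one (s : ℕ) : R 1 s = (2*((s:ℝ)+1)+1) * s * (s+3) / ((s+1)*(s+2))^6 := by
  have h0 := R_zero s
  have h := Q_succ 0 s
  have hq : (2*((s:ℝ)+1)) * Q 0 s = 2 * (1 / ((s:ℝ)+1)^5) := by
    rw [← R_zero]; unfold R; simp
  have hq0 : Q 0 s = 1/((s:ℝ)+1)^6 := by
    have : (2*((s:ℝ)+1)) ≠ 0 := by positivity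
    apply mul_left_cancel₀ this
    rw [hq]; field_simp
  have hR : R 1 s = (2*((s:ℝ)+1)+((1:ℕ):ℝ)) * Q (0+1) s := rfl
  rw [hR, h, hq0]
  have e1 : (s:ℝ)+1 ≠ 0 := by positivity
  have e2 : (s:ℝ)+2 ≠ 0 := by positivity
  push_cast
  rw [show (s:ℝ)+1+0+1 = s+2 by ring]
  field_simp
  ring

theorem R_two (s : ℕ) : R 2 s = 16*(2*((s:ℝ)+1)+2) * s * (s-1) * (s+4)*(s+5)
    / ((s+1)*(s+2)*(s+3))^6 := by
  have h1 := R_one s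
  have h := Q_succ 1 s
  have hq1 : Q 1 s = (s:ℝ) * (s+3) / ((s+1)*(s+2))^6 := by
    have : (2*((s:ℝ)+1)+1) ≠ 0 := by positivity
    apply mul_left_cancel₀ this
    unfold R at h1
    push_cast at h1
    rw [h1]; ring
  have hR : R 2 s = (2*((s:ℝ)+1)+((2:ℕ):ℝ)) * Q (1+1) s := rfl
  rw [hR, h, hq1]
  have e1 : (s:ℝ)+1 ≠ 0 := by positivity
  have e2 : (s:ℝ)+2 ≠ 0 := by positivity
  have e3 : (s:ℝ)+3 ≠ 0 := by positivity
  push_cast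
  rw [show (s:ℝ)+1+1+1 = s+3 by ring]
  field_simp
  ring

theorem r_one : r 1 = 18 * zetaRe 5 + 66 * zetaRe 3 - 98 := by
  have := r_form 1 18 66 (fun s => 33*(1/((s:ℝ)+1))^2 + 33*(1/((s:ℝ)+1))^3 + 21*(1/((s:ℝ)+1))^4
    + 9*(1/((s:ℝ)+1))^5 + 2*(1/((s:ℝ)+1))^6) ?_ ?_
  · rw [this]; norm_num
  · have hc : Continuous (fun a : ℝ => 33*a^2 + 33*a^3 + 21*a^4 + 9*a^5 + 2*a^6) := by fun_prop
    have := (hc.tendsto 0).comp tendsto_inv1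
    simpa [Function.comp_def] using this
  · intro s
    rw [R_one]
    have e1 : (s:ℝ)+1 ≠ 0 := by positivity
    have e2 : (s:ℝ)+2 ≠ 0 := by positivity
    push_cast
    rw [show (s:ℝ)+1+1 = s+2 by ring]
    field_simp
    ring

theorem r_two : r 2 = 938 * zetaRe 5 + 6125/2 * zetaRe 3 - 74463/16 := by
  have := r_form 2 938 (6125/2) (fun s => 10864*(1/((s:ℝ)+1)) - 10864*(1/((s:ℝ)+2))
    - 37331/8*(1/((s:ℝ)+1))^2 - 37331/8*(1/((s:ℝ)+2))^2
    + 19117/4*(1/((s:ℝ)+1))^3 - 6867/4*(1/((s:ℝ)+2))^3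
    - 1015/2*(1/((s:ℝ)+1))^4 - 1015/2*(1/((s:ℝ)+2))^4
    + 1045*(1/((s:ℝ)+1))^5 - 107*(1/((s:ℝ)+2))^5
    - 12*(1/((s:ℝ)+1))^6 - 12*(1/((s:ℝ)+2))^6) ?_ ?_
  · rw [this]; norm_num
  · have hc : Continuous (fun p : ℝ × ℝ => 10864*p.1 - 10864*p.2 - 37331/8*p.1^2 - 37331/8*p.2^2
      + 19117/4*p.1^3 - 6867/4*p.2^3 - 1015/2*p.1^4 - 1015/2*p.2^4 + 1045*p.1^5 - 107*p.2^5
      - 12*p.1^6 - 12*p.2^6) := by fun_prop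
    have := (hc.tendsto (0,0)).comp (tendsto_inv1.prodMk_nhds tendsto_inv2)
    simpa [Function.comp_def] using this
  · intro s
    rw [R_two]
    have e1 : (s:ℝ)+1 ≠ 0 := by positivity
    have e2 : (s:ℝ)+2 ≠ 0 := by positivity
    have e3 : (s:ℝ)+3 ≠ 0 := by positivity
    push_cast
    rw [show (s:ℝ)+1+1 = s+2 by ring, show (s:ℝ)+1+2 = s+3 by ring]
    field_simp
    ring

/-- Coefficients expressing the second family of linear forms. -/
def sS1 (n : ℝ) : ℝ := -(n+1)*(2*n+3)*(9299*n^4 + 55794*n^3 + 126669*n^2 + 128934*n + 49642)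

def sS2 (n : ℝ) : ℝ := 98*(n+1)*(n+2)^5

/-- The eliminated (wedge) sequence attached to two solutions. -/
def E (y w : ℕ → ℝ) (n : ℕ) : ℝ :=
  (sS1 n * (y n * w (n+1) - y (n+1) * w n) + sS2 n * (y n * w (n+2) - y (n+2) * w n))
    / (4 * (2*(n:ℝ)+1) * cC n)

def A0 (x : ℝ) : ℝ := 41218*x^3 - 48459*x^2 + 20010*x - 2871

def A1 (x : ℝ) : ℝ := 2*(48802112*x^9 + 89030880*x^8 + 36002654*x^7 - 24317344*x^6
  - 19538418*x^5 + 1311365*x^4 + 3790503*x^3 + 460056*x^2 - 271701*x - 60291)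

def A2 (x : ℝ) : ℝ := 3874492*x^8 - 2617900*x^7 - 3144314*x^6 + 2947148*x^5
  + 647130*x^4 - 1182926*x^3 + 115771*x^2 + 170716*x - 44541

theorem cC_pos (x : ℝ) (hx : 0 ≤ x) : 0 < cC x := by unfold cC; positivity

def RecA (y : ℕ → ℝ) : Prop := ∀ m : ℕ,
  ((m:ℝ)+3)^6 * A0 ((m:ℝ)+2) * y (m+3) + A1 ((m:ℝ)+2) * y (m+2)
    - 4*(2*(m:ℝ)+3) * A2 ((m:ℝ)+2) * y (m+1)
    - 4*((m:ℝ)+1)^4*(2*(m:ℝ)+3)*(2*(m:ℝ)+1) * A0 ((m:ℝ)+3) * y m = 0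

theorem wedge_step {b0 b1 b2 b3 y0 y1 y2 y3 w0 w1 w2 w3 : ℝ} (h0 : b0 ≠ 0)
    (hy : b3*y3 + b2*y2 + b1*y1 + b0*y0 = 0) (hw : b3*w3 + b2*w2 + b1*w1 + b0*w0 = 0) :
    y0*w1 - y1*w0 = (b2*(y1*w2-y2*w1) + b3*(y1*w3-y3*w1))/b0 ∧
    y0*w2 - y2*w0 = (-b1*(y1*w2-y2*w1) + b3*(y2*w3-y3*w2))/b0 := by
  constructor
  · rw [eq_div_iff h0]; linear_combination w1*hy - y1*hw
  · rw [eq_div_iff h0]; linear_combination w2*hy - y2*hw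

theorem wedge_step' {b0 b1 b2 b3 y0 y1 y2 y3 w0 w1 w2 w3 : ℝ} (h3 : b3 ≠ 0)
    (hy : b3*y3 + b2*y2 + b1*y1 + b0*y0 = 0) (hw : b3*w3 + b2*w2 + b1*w1 + b0*w0 = 0) :
    y1*w3 - y3*w1 = (b0*(y0*w1-y1*w0) - b2*(y1*w2-y2*w1))/b3 ∧
    y2*w3 - y3*w2 = (b0*(y0*w2-y2*w0) + b1*(y1*w2-y2*w1))/b3 := by
  constructor
  · rw [eq_div_iff h3]; linear_combination y1*hw - w1*hy
  · rw [eq_div_iff h3]; linear_combination y2*hw - w2*hy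

theorem bB0_pos (x : ℝ) (hx : 0 ≤ x) : 0 < bB0 x := by
  have := cC_pos (x+1) (by linarith)
  unfold bB0; positivity

theorem bB3_pos (x : ℝ) (hx : 0 ≤ x) : 0 < bB3 x := by
  have := cC_pos x hx
  unfold bB3; positivity

set_option maxHeartbeats 4000000 in
theorem wedge_id (x m12 m13 m23 : ℝ) (hx : 0 ≤ x) :
    (x+3)^6 * A0 (x+2) * ((sS1 (x+3) * ((bB0 (x+1) * m13 + bB1 (x+1) * m23)/bB3 (x+1))
      + sS2 (x+3) * ((bB0 (x+2) * m23 - bB2 (x+2) * ((bB0 (x+1) * m13 + bB1 (x+1) * m23)/bB3 (x+1)))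
        /bB3 (x+2))) / (4*(2*(x+3)+1)*cC (x+3)))
    + A1 (x+2) * ((sS1 (x+2) * m23 + sS2 (x+2) * ((bB0 (x+1) * m12 - bB2 (x+1) * m23)/bB3 (x+1)))
        / (4*(2*(x+2)+1)*cC (x+2)))
    - 4*(2*x+3)*A2 (x+2) * ((sS1 (x+1) * m12 + sS2 (x+1) * m13) / (4*(2*(x+1)+1)*cC (x+1)))
    - 4*(x+1)^4*(2*x+3)*(2*x+1)*A0 (x+3) * ((sS1 x * ((bB2 x * m12 + bB3 x * m13)/bB0 x)
      + sS2 x * ((-bB1 x * m12 + bB3 x * m23)/bB0 x)) / (4*(2*x+1)*cC x)) = 0 := by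
  have c0 := (cC_pos x hx).ne'
  have c1 := (cC_pos (x+1) (by linarith)).ne'
  have c2 := (cC_pos (x+2) (by linarith)).ne'
  have c3 := (cC_pos (x+3) (by linarith)).ne'
  have d0 : 2*x+1 ≠ 0 := by positivity
  have d1 : 2*x+3 ≠ 0 := by positivity
  have d2 : 2*x+5 ≠ 0 := by positivity
  have d3 : 2*x+7 ≠ 0 := by positivity
  have f1 : x+1 ≠ 0 := by positivity
  have f2 : x+2 ≠ 0 := by positivity
  have f3 : x+3 ≠ 0 := by positivity
  have f4 : x+4 ≠ 0 := by positivity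
  have f5 : x+5 ≠ 0 := by positivity
  unfold bB0 bB3 sS1 sS2
  rw [show x+1+1 = x+2 by ring, show x+1+2 = x+3 by ring, show x+1+3 = x+4 by ring,
    show x+2+1 = x+3 by ring, show x+2+2 = x+4 by ring, show x+2+3 = x+5 by ring,
    show x+3+1 = x+4 by ring, show x+3+2 = x+5 by ring,
    show 2*(x+3)+1 = 2*x+7 by ring, show 2*(x+2)+1 = 2*x+5 by ring,
    show 2*(x+1)+1 = 2*x+3 by ring, show 2*(x+3)+3 = 2*x+9 by ring,
    show 2*(x+2)+3 = 2*x+7 by ring, show 2*(x+1)+3 = 2*x+5 by ring]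
  field_simp
  unfold A0 A1 A2 bB1 bB2 cC
  ring

theorem E_rec (y w : ℕ → ℝ) (hy : RecB y) (hw : RecB w) : RecA (E y w) := by
  intro m
  have hm : (0:ℝ) ≤ m := Nat.cast_nonneg m
  have y0 := hy m
  have y1 := hy (m+1)
  have y2 := hy (m+2)
  have w0 := hw m
  have w1 := hw (m+1)
  have w2 := hw (m+2)
  obtain ⟨a1, a2⟩ := wedge_step (bB0_pos m hm).ne' y0 w0
  push_cast at y1 y2 w1 w2
  obtain ⟨a3, a4⟩ := wedge_step' (bB3_pos ((m:ℝ)+1) (by linarith)).ne' y1 w1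
  obtain ⟨a5, a6⟩ := wedge_step' (bB3_pos ((m:ℝ)+2) (by linarith)).ne' y2 w2
  have := wedge_id m (y (m+1) * w (m+2) - y (m+2) * w (m+1))
    (y (m+1) * w (m+3) - y (m+3) * w (m+1)) (y (m+2) * w (m+3) - y (m+3) * w (m+2)) hm
  unfold E
  push_cast
  rw [a1, a2]
  simp only [Nat.add_assoc, Nat.reduceAdd] at *
  rw [a5, a4, a3]
  exact this

theorem tendsto_of_contract (d : ℕ → ℝ) (M : ℝ) (hM : 0 < M) (h0 : ∀ n, 0 ≤ d n)
    (h1 : ∀ᶠ n in atTop, d n ≤ M)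
    (h : ∀ B : ℝ, 0 < B → (∀ᶠ n in atTop, d n ≤ B) → ∀ᶠ n in atTop, d n ≤ (3/4) * B) :
    Tendsto d atTop (nhds 0) := by
  have hk : ∀ k : ℕ, ∀ᶠ n in atTop, d n ≤ (3/4)^k * M := by
    intro k
    induction k with
    | zero => simpa using h1
    | succ k ih =>
      have := h _ (by positivity) ih
      filter_upwards [this] with n hn
      rw [pow_succ]; linarith
  rw [Metric.tendsto_atTop]
  intro ε hε
  have ht : Tendsto (fun k : ℕ => (3/4 : ℝ)^k * M) atTop (nhds (0 * M)) :=
    (tendsto_pow_atTop_nhds_zero_of_lt_one (by norm_num) (by norm_num)).mul_const M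
  rw [zero_mul] at ht
  obtain ⟨k, hk'⟩ := (ht.eventually (gt_mem_nhds hε)).exists
  obtain ⟨N, hN⟩ := eventually_atTop.mp (hk k)
  refine ⟨N, fun n hn => ?_⟩
  rw [Real.dist_eq, sub_zero, abs_of_nonneg (h0 n)]
  exact lt_of_le_of_lt (hN n hn) hk'

theorem key_ineq {z z1 z2 l a b c d a' b' c' d' M : ℝ}
    (h : z * (b + c * z1 - d * z1 * z2) = a) (h' : l * (b' + c' * l - d' * l^2) = a')
    (hz : 0 ≤ z) (hz1 : 0 ≤ z1) (hz2 : 0 ≤ z2) (hl : 0 ≤ l)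
    (hzM : z ≤ M) (hz1M : z1 ≤ M) (hz2M : z2 ≤ M) (hlM : l ≤ M) (hM : M ≤ 1)
    (hc : 0 ≤ c') (hd : 0 ≤ d') :
    |z - l| * (b' + c' * l - d' * l^2) ≤ M * (c' * |z1 - l| + d' * M * (|z1 - l| + |z2 - l|))
      + (|b - b'| + |c - c'| + |d - d'| + |a - a'|) := by
  have e : (z - l) * (b' + c' * l - d' * l^2) =
      z * ((b' - b) + (c' - c) * z1 - c' * (z1 - l) + (d - d') * (z1 * z2)
        + d' * (z1 * (z2 - l) + l * (z1 - l))) + (a - a') := by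
    linear_combination h - h'
  have hM0 : 0 ≤ M := hz.trans hzM
  have h1 : |z - l| * (b' + c' * l - d' * l^2) ≤ |(z - l) * (b' + c' * l - d' * l^2)| := by
    rw [abs_mul]
    gcongr
    exact le_abs_self _
  refine h1.trans ?_
  rw [e]
  have k1 := abs_nonneg (z1 - l)
  have k2 := abs_nonneg (z2 - l)
  have h2 : |(b' - b) + (c' - c) * z1 - c' * (z1 - l) + (d - d') * (z1 * z2)
        + d' * (z1 * (z2 - l) + l * (z1 - l))| ≤
        |b - b'| + |c - c'| * 1 + c' * |z1 - l| + |d - d'| * (1 * 1)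
          + d' * (M * |z2 - l| + M * |z1 - l|) := by
    refine (abs_add_le _ _).trans ?_
    refine add_le_add ((abs_add_le _ _).trans (add_le_add ((abs_sub _ _).trans
      (add_le_add ((abs_add_le _ _).trans (add_le_add ?_ ?_)) ?_)) ?_)) ?_
    · rw [abs_sub_comm]
    · rw [abs_mul, abs_sub_comm, abs_of_nonneg hz1]; gcongr; linarith
    · rw [abs_mul, abs_of_nonneg hc]
    · rw [abs_mul, abs_of_nonneg (mul_nonneg hz1 hz2)]; gcongr <;> linarith
    · rw [abs_mul, abs_of_nonneg hd]
      gcongr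
      refine (abs_add_le _ _).trans ?_
      rw [abs_mul, abs_mul, abs_of_nonneg hz1, abs_of_nonneg hl]
      gcongr
  refine (abs_add_le _ _).trans ?_
  rw [abs_mul, abs_of_nonneg hz]
  have b1 := abs_nonneg (b - b')
  have b2 := abs_nonneg (c - c')
  have b3 := abs_nonneg (d - d')
  calc _ ≤ M * (|b - b'| + |c - c'| * 1 + c' * |z1 - l| + |d - d'| * (1 * 1)
          + d' * (M * |z2 - l| + M * |z1 - l|)) + |a - a'| := by gcongr
    _ = M * (c' * |z1 - l| + d' * M * (|z1 - l| + |z2 - l|)) + M * (|b - b'| + |c - c'| + |d - d'|)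
          + |a - a'| := by ring
    _ ≤ M * (c' * |z1 - l| + d' * M * (|z1 - l| + |z2 - l|)) + 1 * (|b - b'| + |c - c'| + |d - d'|)
          + |a - a'| := by gcongr
    _ = _ := by ring

/-- Normalised coefficients. -/
def al (n : ℕ) : ℝ := bB0 n / bB3 n
def be (n : ℕ) : ℝ := -(bB1 n / bB3 n)
def ga (n : ℕ) : ℝ := -(bB2 n / bB3 n)

theorem rec_norm {y : ℕ → ℝ} (hy : RecB y) (n : ℕ) :
    y (n+3) = ga n * y (n+2) + be n * y (n+1) - al n * y n := by
  have h := hy n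
  have h3 := (bB3_pos n (Nat.cast_nonneg n)).ne'
  unfold al be ga
  field_simp
  linarith

theorem ratio_lim (P D : ℝ → ℝ) (p d : ℝ → ℝ) (k : ℕ) (hP : ∀ x : ℝ, x ≠ 0 → P x = x^k * p (1/x))
    (hD : ∀ x : ℝ, x ≠ 0 → D x = x^k * d (1/x)) (hp : Continuous p) (hd : Continuous d)
    (h0 : d 0 ≠ 0) : Tendsto (fun n : ℕ => P n / D n) atTop (nhds (p 0 / d 0)) := by
  have hi : Tendsto (fun n : ℕ => 1 / (n:ℝ)) atTop (nhds 0) := tendsto_one_div_atTop_nhds_zero_nat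
  have h1 := ((hp.tendsto 0).comp hi).div ((hd.tendsto 0).comp hi) h0
  refine h1.congr' ?_
  filter_upwards [eventually_gt_atTop 0] with n hn
  have hn' : (n:ℝ) ≠ 0 := by positivity
  simp only [Function.comp, Pi.div_apply]
  rw [hP _ hn', hD _ hn', mul_div_mul_left _ _ (pow_ne_zero _ hn')]

def d3 (e : ℝ) : ℝ := (1+2*e)*(1+3*e)^5*(41218 + 172113*e + 240582*e^2 + 112558*e^3)

theorem bB3_d3 (x : ℝ) (hx : x ≠ 0) : bB3 x = x^9 * d3 (1/x) := by
  unfold bB3 d3 cC; field_simp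

theorem d3_cont : Continuous d3 := by unfold d3; fun_prop

theorem d3_zero : d3 0 = 41218 := by unfold d3; norm_num

theorem al_lim : Tendsto al atTop (nhds 4) := by
  have := ratio_lim bB0 bB3 (fun e => 2*(2+3*e)*(1+e)^5*(41218*(1+e)^3 + 172113*(1+e)^2*e
    + 240582*(1+e)*e^2 + 112558*e^3)) d3 9 (fun x hx => by unfold bB0 cC; field_simp) bB3_d3
    (by fun_prop) d3_cont (by rw [d3_zero]; norm_num)
  rw [d3_zero] at this
  norm_num at this
  exact this

theorem be_lim : Tendsto be atTop (nhds 2368) := by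
  have := (ratio_lim bB1 bB3 (fun e => -2*(48802112 + 789407136*e + 5639012702*e^2 + 23351915204*e^3
    + 61795716198*e^4 + 108398618199*e^5 + 126080841295*e^6 + 93794477946*e^7
    + 40508900959*e^8 + 7741215265*e^9)) d3 9 (fun x hx => by unfold bB1; field_simp) bB3_d3
    (by fun_prop) d3_cont (by rw [d3_zero]; norm_num)).neg
  rw [d3_zero] at this
  norm_num at this
  exact this

theorem ga_lim : Tendsto ga atTop (nhds 188) := by
  have := (ratio_lim bB2 bB3 (fun e => -2*(1+2*e)*(3874492 + 64609772*e + 467449390*e^2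
    + 1914997100*e^3 + 4854959850*e^4 + 7794497470*e^5 + 7734655711*e^6 + 4336014520*e^7
    + 1051310919*e^8)) d3 9 (fun x hx => by unfold bB2; field_simp) bB3_d3
    (by fun_prop) d3_cont (by rw [d3_zero]; norm_num)).neg
  rw [d3_zero] at this
  norm_num at this
  exact this

theorem abs_lim {f : ℕ → ℝ} {L : ℝ} (h : Tendsto f atTop (nhds L)) :
    Tendsto (fun n => |f n - L|) atTop (nhds 0) := by
  have := (h.sub_const L).abs
  simpa using this

theorem err_lim : Tendsto (fun n => |be n - 2368| + |ga n - 188| + |al n - 4|) atTop (nhds 0) := by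
  simpa using ((abs_lim be_lim).add (abs_lim ga_lim)).add (abs_lim al_lim)

theorem r_ratio (l : ℝ) (hl0 : 0 < l) (hl1 : l ≤ 1/2) (hl : l * (2368 + 188*l - 1*l^2) = 4) :
    Tendsto (fun n => r (n+1) / r n) atTop (nhds l) := by
  have hz0 : ∀ n, 0 ≤ r (n+1) / r n := fun n => (div_pos (r_pos _) (r_pos _)).le
  have hz1 : ∀ n, r (n+1) / r n ≤ 1/2 := fun n => by
    rw [div_le_iff₀ (r_pos n)]; exact r_succ_le n
  have hrec : ∀ n, r (n+1) / r n * (be n + ga n * (r (n+2) / r (n+1))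
      - 1 * (r (n+2) / r (n+1)) * (r (n+3) / r (n+2))) = al n := by
    intro n
    have h := rec_norm r_rec n
    have p0 := (r_pos n).ne'
    have p1 := (r_pos (n+1)).ne'
    have p2 := (r_pos (n+2)).ne'
    field_simp
    linarith
  have hlim : Tendsto (fun n => |r (n+1) / r n - l|) atTop (nhds 0) := by
    apply tendsto_of_contract _ 1 one_pos (fun n => abs_nonneg _)
    · filter_upwards with n
      rw [abs_le]
      constructor <;> linarith [hz0 n, hz1 n]
    · intro B hB hev
      have h1 := (tendsto_add_atTop_nat 1).eventually hev
      have h2 := (tendsto_add_atTop_nat 2).eventually hev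
      have h3 := err_lim.eventually (gt_mem_nhds hB)
      filter_upwards [h1, h2, h3] with n h1 h2 h3
      have := key_ineq (hrec n) hl (hz0 n) (hz0 (n+1)) (hz0 (n+2)) hl0.le (hz1 n) (hz1 (n+1))
        (hz1 (n+2)) hl1 (by norm_num) (by norm_num) (by norm_num)
      simp only [Nat.add_assoc, Nat.reduceAdd] at h1 h2 this
      rw [sub_self, abs_zero] at this
      have hL : 2368 ≤ 2368 + 188*l - 1*l^2 := by nlinarith
      have h4 : |r (n+1) / r n - l| * 2368 ≤ |r (n+1) / r n - l| * (2368 + 188*l - 1*l^2) := by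
        gcongr
      linarith
  rw [tendsto_iff_dist_tendsto_zero]
  simpa [Real.dist_eq] using hlim

theorem ga_ge (n : ℕ) : 1 ≤ ga n := by
  have hn : (0:ℝ) ≤ n := Nat.cast_nonneg n
  unfold ga
  rw [← neg_div, le_div_iff₀ (bB3_pos n hn), ← sub_nonneg]
  unfold bB2 bB3 cC
  ring_nf
  positivity

theorem be_ge (n : ℕ) : al n ≤ be n := by
  have hn : (0:ℝ) ≤ n := Nat.cast_nonneg n
  unfold al be
  rw [← neg_div, div_le_div_iff_of_pos_right (bB3_pos n hn), ← sub_nonneg]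
  unfold bB1 bB0 cC
  ring_nf
  positivity

theorem al_nonneg (n : ℕ) : 0 ≤ al n :=
  div_nonneg (bB0_pos n (Nat.cast_nonneg n)).le (bB3_pos n (Nat.cast_nonneg n)).le

theorem w_mono {w : ℕ → ℝ} (hw : RecB w) (h0 : 0 ≤ w 0) (h1 : w 0 ≤ w 1) (h2 : w 1 ≤ w 2) (n : ℕ) :
    0 ≤ w n ∧ w n ≤ w (n+1) ∧ w (n+1) ≤ w (n+2) := by
  induction n with
  | zero => exact ⟨h0, h1, h2⟩
  | succ n ih =>
    obtain ⟨i0, i1, i2⟩ := ih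
    refine ⟨i0.trans i1, i2, ?_⟩
    have := rec_norm hw n
    have g := ga_ge n
    have b := be_ge n
    have a := al_nonneg n
    have : w (n+1+2) = w (n+3) := rfl
    nlinarith [mul_le_mul_of_nonneg_right b (i0.trans i1), mul_le_mul_of_nonneg_left i1 a,
      mul_le_mul_of_nonneg_right g ((i0.trans i1).trans i2)]

theorem w_step {w : ℕ → ℝ} (hw : RecB w) (h0 : 0 ≤ w 0) (h1 : w 0 ≤ w 1) (h2 : w 1 ≤ w 2) (n : ℕ) :
    ga n * w (n+2) ≤ w (n+3) := by
  obtain ⟨i0, i1, i2⟩ := w_mono hw h0 h1 h2 n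
  have := rec_norm hw n
  have b := be_ge n
  have a := al_nonneg n
  nlinarith [mul_le_mul_of_nonneg_right b (i0.trans i1), mul_le_mul_of_nonneg_left i1 a]

theorem w_pos {w : ℕ → ℝ} (hw : RecB w) (h0 : 0 ≤ w 0) (h1 : w 0 ≤ w 1) (h2 : w 1 ≤ w 2)
    (hp : 0 < w 1) (n : ℕ) : 0 < w (n+1) := by
  induction n with
  | zero => exact hp
  | succ n ih => exact lt_of_lt_of_le ih (w_mono hw h0 h1 h2 n).2.2

theorem w_ratio {w : ℕ → ℝ} (hw : RecB w) (h0 : 0 ≤ w 0) (h1 : w 0 ≤ w 1) (h2 : w 1 ≤ w 2)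
    (hp : 0 < w 1) (l : ℝ) (hl0 : 0 < l) (hl1 : l ≤ 1/100)
    (hl : l * (188 + 2368*l - 4*l^2) = 1) :
    Tendsto (fun n => w n / w (n+1)) atTop (nhds l) := by
  have wp := w_pos hw h0 h1 h2 hp
  have hz0 : ∀ n, 0 ≤ w n / w (n+1) := fun n => div_nonneg (w_mono hw h0 h1 h2 n).1 (wp n).le
  have hz1 : ∀ᶠ n in atTop, w n / w (n+1) ≤ 1/100 := by
    have hg : ∀ᶠ n in atTop, 100 < ga n := ga_lim.eventually (lt_mem_nhds (by norm_num))
    obtain ⟨N, hN⟩ := eventually_atTop.mp hg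
    refine eventually_atTop.mpr ⟨N+2, fun n hn => ?_⟩
    obtain ⟨m, rfl⟩ : ∃ m, n = m + 2 := ⟨n - 2, by omega⟩
    have := w_step hw h0 h1 h2 m
    have g := hN m (by omega)
    rw [div_le_iff₀ (wp _)]
    have : w (m+2+1) = w (m+3) := rfl
    nlinarith [wp (m+1)]
  have hrec : ∀ n, w (n+2) / w (n+2+1) * (ga n + be n * (w (n+1) / w (n+1+1))
      - al n * (w (n+1) / w (n+1+1)) * (w n / w (n+1))) = 1 := by
    intro n
    have h := rec_norm hw n
    have p1 := (wp n).ne'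
    have p2 : w (n+2) ≠ 0 := (wp (n+1)).ne'
    have p3 : w (n+3) ≠ 0 := (wp (n+2)).ne'
    rw [show n+2+1 = n+3 from rfl, show n+1+1 = n+2 from rfl]
    field_simp
    linarith
  have hlim : Tendsto (fun n => |w n / w (n+1) - l|) atTop (nhds 0) := by
    apply tendsto_of_contract _ 1 one_pos (fun n => abs_nonneg _)
    · filter_upwards [hz1] with n hn
      rw [abs_le]
      constructor <;> linarith [hz0 n]
    · intro B hB hev
      have g1 := (tendsto_add_atTop_nat 1).eventually hev
      have z1' := (tendsto_add_atTop_nat 1).eventually hz1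
      have z2' := (tendsto_add_atTop_nat 2).eventually hz1
      have g3 := err_lim.eventually (gt_mem_nhds hB)
      have hfin : ∀ᶠ n in atTop, |w (n+2) / w (n+2+1) - l| ≤ 3/4 * B := by
        filter_upwards [hev, g1, g3, hz1, z1', z2'] with n k0 k1 k3 u0 u1 u2
        have := key_ineq (hrec n) hl (hz0 (n+2)) (hz0 (n+1)) (hz0 n) hl0.le u2 u1
          u0 hl1 (by norm_num) (by norm_num) (by norm_num)
        simp only [Nat.add_assoc, Nat.reduceAdd] at k0 k1 this ⊢
        rw [sub_self, abs_zero] at this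
        have hL : 188 ≤ 188 + 2368*l - 4*l^2 := by nlinarith
        have h4 : |w (n+2) / w (n+3) - l| * 188
            ≤ |w (n+2) / w (n+3) - l| * (188 + 2368*l - 4*l^2) := by
          gcongr
        linarith
      obtain ⟨N, hN⟩ := eventually_atTop.mp hfin
      refine eventually_atTop.mpr ⟨N+2, fun n hn => ?_⟩
      obtain ⟨m, rfl⟩ : ∃ m, n = m + 2 := ⟨n - 2, by omega⟩
      exact hN m (by omega)
  rw [tendsto_iff_dist_tendsto_zero]
  simpa [Real.dist_eq] using hlim

theorem RecB_unique {y z : ℕ → ℝ} (hy : RecB y) (hz : RecB z) (h0 : y 0 = z 0) (h1 : y 1 = z 1)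
    (h2 : y 2 = z 2) (n : ℕ) : y n = z n ∧ y (n+1) = z (n+1) ∧ y (n+2) = z (n+2) := by
  induction n with
  | zero => exact ⟨h0, h1, h2⟩
  | succ n ih =>
    obtain ⟨i0, i1, i2⟩ := ih
    refine ⟨i1, i2, ?_⟩
    have a := rec_norm hy n
    have b := rec_norm hz n
    rw [show n+1+2 = n+3 from rfl, a, b, i0, i1, i2]

theorem A0_pos (m : ℕ) : 0 < A0 ((m:ℝ)+2) := by
  have : A0 ((m:ℝ)+2) = 41218*(m:ℝ)^3 + 198849*(m:ℝ)^2 + 320790*(m:ℝ) + 173057 := by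
    unfold A0; ring
  rw [this]; positivity

theorem RecA_unique {y z : ℕ → ℝ} (hy : RecA y) (hz : RecA z) (h0 : y 0 = z 0) (h1 : y 1 = z 1)
    (h2 : y 2 = z 2) (n : ℕ) : y n = z n ∧ y (n+1) = z (n+1) ∧ y (n+2) = z (n+2) := by
  induction n with
  | zero => exact ⟨h0, h1, h2⟩
  | succ n ih =>
    obtain ⟨i0, i1, i2⟩ := ih
    refine ⟨i1, i2, ?_⟩
    have a := hy n
    have b := hz n
    rw [i0, i1, i2] at a
    have hp : ((n:ℝ)+3)^6 * A0 ((n:ℝ)+2) ≠ 0 := by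
      have := A0_pos n
      positivity
    rw [show n+1+2 = n+3 from rfl]
    apply mul_left_cancel₀ hp
    linarith

/-- Solutions of the recursion from initial values. -/
def solT (a b c : ℝ) : ℕ → ℝ × ℝ × ℝ
  | 0 => (a, b, c)
  | n+1 => ((solT a b c n).2.1, (solT a b c n).2.2,
      ga n * (solT a b c n).2.2 + be n * (solT a b c n).2.1 - al n * (solT a b c n).1)

theorem RecB_of_norm {y : ℕ → ℝ}
    (h : ∀ n, y (n+3) = ga n * y (n+2) + be n * y (n+1) - al n * y n) : RecB y := by
  intro n
  have h3 := (bB3_pos n (Nat.cast_nonneg n)).ne'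
  rw [h n]
  unfold al be ga
  field_simp
  ring

theorem exists_sol (a b c : ℝ) : ∃ y : ℕ → ℝ, RecB y ∧ y 0 = a ∧ y 1 = b ∧ y 2 = c :=
  ⟨fun n => (solT a b c n).1, RecB_of_norm fun n => by simp only [solT], rfl, rfl, rfl⟩

theorem RecA_cast {q : ℕ → ℚ} (hq : Rec1 q) : RecA (fun n => (q n : ℝ)) := by
  intro m
  have h := hq (m+2) (by omega)
  have h' : (((((m+2:ℕ) : ℚ) + 1)^6 * a0 ((m+2:ℕ) : ℚ) * q (m+2+1) + a1 ((m+2:ℕ) : ℚ) * q (m+2)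
    - 4*(2*((m+2:ℕ) : ℚ) - 1) * a2 ((m+2:ℕ) : ℚ) * q (m+2-1)
    - 4*(((m+2:ℕ) : ℚ) - 1)^4*(2*((m+2:ℕ) : ℚ) - 1)*(2*((m+2:ℕ) : ℚ) - 3)
      * a0 (((m+2:ℕ) : ℚ) + 1) * q (m+2-2) : ℚ) : ℝ) = 0 := by
    rw [h]; simp
  rw [show m+2-1 = m+1 from rfl, show m+2-2 = m from rfl, show m+2+1 = m+3 from rfl] at h'
  unfold a0 a1 a2 at h'
  push_cast at h'
  unfold A0 A1 A2
  rw [← h']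
  ring

theorem log_lim {f : ℕ → ℝ} {μ : ℝ} (hμ : 0 < μ) (hf : ∀ᶠ n in atTop, f n ≠ 0)
    (h : Tendsto (fun n => f (n+1) / f n) atTop (nhds μ)) :
    Tendsto (fun n : ℕ => Real.log |f n| / (n:ℝ)) atTop (nhds (Real.log μ)) := by
  have h1 : Tendsto (fun n => Real.log (f (n+1) / f n)) atTop (nhds (Real.log μ)) :=
    (Real.continuousAt_log hμ.ne').tendsto.comp h
  have h2 : Tendsto (fun n => Real.log |f (n+1)| - Real.log |f n|) atTop (nhds (Real.log μ)) := by
    refine h1.congr' ?_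
    filter_upwards [hf, (tendsto_add_atTop_nat 1).eventually hf] with n a b
    rw [Real.log_div b a, Real.log_abs, Real.log_abs]
  have h3 := h2.cesaro
  have h4 : Tendsto (fun n : ℕ => Real.log |f 0| * (1/(n:ℝ))) atTop (nhds 0) := by
    simpa using (tendsto_one_div_atTop_nhds_zero_nat (𝕜 := ℝ)).const_mul (Real.log |f 0|)
  have h5 := h3.add h4
  rw [add_zero] at h5
  refine h5.congr fun n => ?_
  rw [Finset.sum_range_sub (fun n => Real.log |f n|)]
  ring

/-- Denominator of `E`, divided out with an extra square. -/
def dE (x : ℝ) : ℝ := 4*(2*x+1)*cC x*x^2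

def dEd (e : ℝ) : ℝ := 4*(2+e)*(41218 + 172113*e + 240582*e^2 + 112558*e^3)

theorem dE_dEd (x : ℝ) (hx : x ≠ 0) : dE x = x^6 * dEd (1/x) := by
  unfold dE dEd cC; field_simp

theorem s1_lim : Tendsto (fun n : ℕ => sS1 n / dE n) atTop (nhds (-18598/329744)) := by
  have := ratio_lim sS1 dE (fun e => -(1+e)*(2+3*e)*(9299 + 55794*e + 126669*e^2 + 128934*e^3
    + 49642*e^4)) dEd 6 (fun x hx => by unfold sS1; field_simp) dE_dEd
    (by fun_prop) (by unfold dEd; fun_prop) (by unfold dEd; norm_num)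
  unfold dEd at this
  norm_num at this ⊢
  exact this

theorem s2_lim : Tendsto (fun n : ℕ => sS2 n / dE n) atTop (nhds (98/329744)) := by
  have := ratio_lim sS2 dE (fun e => 98*(1+e)*(1+2*e)^5) dEd 6
    (fun x hx => by unfold sS2; field_simp) dE_dEd
    (by fun_prop) (by unfold dEd; fun_prop) (by unfold dEd; norm_num)
  unfold dEd at this
  norm_num at this ⊢
  exact this

theorem E_ratio {w : ℕ → ℝ} (hw : RecB w) (h0 : 0 ≤ w 0) (h1 : w 0 ≤ w 1) (h2 : w 1 ≤ w 2)
    (hp : 0 < w 1) (l t : ℝ) (hl0 : 0 < l) (hl1 : l ≤ 1/2) (hl : l * (2368 + 188*l - 1*l^2) = 4)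
    (ht0 : 0 < t) (ht1 : t ≤ 1/100) (ht : t * (188 + 2368*t - 4*t^2) = 1) :
    (∀ᶠ n in atTop, E r w n ≠ 0) ∧
    Tendsto (fun n => E r w (n+1) / E r w n) atTop (nhds (l * t⁻¹)) := by
  have wp := w_pos hw h0 h1 h2 hp
  have R := r_ratio l hl0 hl1 hl
  have R1 := R.comp (tendsto_add_atTop_nat 1)
  have T := w_ratio hw h0 h1 h2 hp t ht0 ht1 ht
  have T1 := (T.comp (tendsto_add_atTop_nat 1)).inv₀ ht0.ne'
  set g : ℕ → ℝ := fun n => sS1 n / dE n * (1 - r (n+1) / r n * (w n / w (n+1)))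
    + sS2 n / dE n * ((w (n+1) / w (n+1+1))⁻¹
      - r (n+1) / r n * (r (n+1+1) / r (n+1)) * (w n / w (n+1))) with hg
  have G : Tendsto g atTop (nhds (-18598/329744 * (1 - l * t)
      + 98/329744 * (t⁻¹ - l * l * t))) :=
    (s1_lim.mul ((R.mul T).const_sub 1)).add
      (s2_lim.mul (T1.sub ((R.mul R1).mul T)))
  have L0 : -18598/329744 * (1 - l * t) + 98/329744 * (t⁻¹ - l * l * t) ≠ 0 := by
    have e : -18598/329744 * (1 - l * t) + 98/329744 * (t⁻¹ - l * l * t)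
        = (1 - l*t) * (98 * (1 + l * t) - 18598 * t) / (329744 * t) := by
      field_simp; ring
    rw [e]
    have hlt : l * t ≤ 1/2 * (1/100) := by gcongr
    have k2 : 98 * (1 + l * t) - 18598 * t ≠ 0 := by
      intro hh
      have b1 : 98/18598 ≤ t := by nlinarith [mul_pos hl0 ht0]
      have b2 : t ≤ 98/18549 := by nlinarith
      nlinarith [mul_pos ht0 ht0, mul_nonneg (sub_nonneg.2 b1) (sub_nonneg.2 b2)]
    have k1 : 1 - l*t ≠ 0 := by linarith
    positivity
  have F : ∀ᶠ n in atTop, E r w n = r n * w (n+1) * (n:ℝ)^2 * g n := by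
    filter_upwards [eventually_gt_atTop 0] with n hn
    have hn' : (n:ℝ) ≠ 0 := by positivity
    have c := (cC_pos n (Nat.cast_nonneg n)).ne'
    have d : (2*(n:ℝ)+1) ≠ 0 := by positivity
    have p0 := (r_pos n).ne'
    have p1 := (r_pos (n+1)).ne'
    have q1 := (wp n).ne'
    have q2 : w (n+2) ≠ 0 := (wp (n+1)).ne'
    simp only [hg, E, dE]
    rw [show n+1+1 = n+2 from rfl]
    field_simp
  have gn : ∀ᶠ n in atTop, g n ≠ 0 := G.eventually_ne L0
  constructor
  · filter_upwards [F, gn, eventually_gt_atTop 0] with n a b hn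
    have p0 := (r_pos n).ne'
    have q1 := (wp n).ne'
    have hn' : (n:ℝ) ≠ 0 := by positivity
    rw [a]
    positivity
  · have N : Tendsto (fun n : ℕ => (1 + 1/(n:ℝ))^2) atTop (nhds ((1+0)^2)) :=
      ((tendsto_one_div_atTop_nhds_zero_nat (𝕜 := ℝ)).const_add 1).pow 2
    have Q := ((R.mul T1).mul N).mul ((G.comp (tendsto_add_atTop_nat 1)).div G L0)
    rw [div_self L0] at Q
    norm_num at Q
    refine Q.congr' ?_
    filter_upwards [F, (tendsto_add_atTop_nat 1).eventually F, gn, eventually_gt_atTop 0]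
      with n a a1 b hn
    have p0 := (r_pos n).ne'
    have q1 := (wp n).ne'
    have q2 : w (n+2) ≠ 0 := (wp (n+1)).ne'
    have hn' : (n:ℝ) ≠ 0 := by positivity
    rw [a, a1]
    simp only [Function.comp, Pi.div_apply, Nat.add_assoc, Nat.reduceAdd]
    push_cast
    field_simp

theorem exists_l : ∃ l : ℝ, 0 < l ∧ l ≤ 1/2 ∧ l * (2368 + 188*l - 1*l^2) = 4 := by
  have hc : ContinuousOn (fun l : ℝ => l * (2368 + 188*l - 1*l^2)) (Set.Icc 0 (1/2)) := by
    fun_prop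
  obtain ⟨l, ⟨h0, h1⟩, h⟩ := intermediate_value_Icc (by norm_num) hc
    (show (4:ℝ) ∈ _ by constructor <;> norm_num)
  refine ⟨l, lt_of_le_of_ne h0 ?_, h1, h⟩
  rintro rfl
  norm_num at h

theorem exists_t : ∃ t : ℝ, 0 < t ∧ t ≤ 1/100 ∧ t * (188 + 2368*t - 4*t^2) = 1 := by
  have hc : ContinuousOn (fun t : ℝ => t * (188 + 2368*t - 4*t^2)) (Set.Icc 0 (1/100)) := by
    fun_prop
  obtain ⟨l, ⟨h0, h1⟩, h⟩ := intermediate_value_Icc (by norm_num) hc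
    (show (1:ℝ) ∈ _ by constructor <;> norm_num)
  refine ⟨l, lt_of_le_of_ne h0 ?_, h1, h⟩
  rintro rfl
  norm_num at h

theorem mu_eq (l t μ : ℝ) (hl0 : 0 < l) (hl1 : l ≤ 1/2) (hl : l * (2368 + 188*l - 1*l^2) = 4)
    (ht0 : 0 < t) (ht1 : t ≤ 1/100) (ht : t * (188 + 2368*t - 4*t^2) = 1) (hμ : 0 < μ)
    (h : μ^3 + 2368*μ^2 - 752*μ - 16 = 0) : l * t⁻¹ = μ := by
  obtain ⟨s, hs⟩ : ∃ s, s = t⁻¹ := ⟨_, rfl⟩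
  have hst : s * t = 1 := by rw [hs]; exact inv_mul_cancel₀ ht0.ne'
  have hs0 : 0 < s := by rw [hs]; positivity
  rw [← hs]
  have hs100 : 100 ≤ s := by nlinarith
  have hs3 : s * (2368 + 188*s - 1*s^2) = 4 := by
    have e : t = 1/s := by field_simp; linarith
    rw [e] at ht
    field_simp at ht
    linarith
  have hne : s - l ≠ 0 := by linarith
  have e1 : l^2 + l*s + s^2 - 188*(l+s) - 2368 = 0 := by
    apply mul_left_cancel₀ hne
    linear_combination hl - hs3
  have e2 : l*s*(l+s-188) = 4 := by
    linear_combination l * e1 + hl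
  have hx : (l*s)^3 + 2368*(l*s)^2 - 752*(l*s) - 16 = 0 := by
    have e3 : (l*s)*(l+s) = 4 + 188*(l*s) := by linarith
    have e4 : (l+s)^2 - l*s - 188*(l+s) - 2368 = 0 := by linarith
    linear_combination (-(l*s)^2) * e4 + ((l*s)*(l+s) + 4 + 188*(l*s) - 188*(l*s)) * e3
  have hx0 : 0 < l*s := by positivity
  generalize l*s = x at hx hx0
  by_contra hn
  have hn' : x - μ ≠ 0 := sub_ne_zero.mpr hn
  have e5 : x^2 + x*μ + μ^2 + 2368*(x+μ) - 752 = 0 := by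
    apply mul_left_cancel₀ hn'
    linear_combination hx - h
  nlinarith [mul_pos hx0 hμ, mul_pos hx0 hx0, mul_pos (mul_pos hx0 hμ) (add_pos hx0 hμ)]

theorem sol_next {y : ℕ → ℝ} (hy : RecB y) :
    y 3 = -(bB2 0 * y 2 + bB1 0 * y 1 + bB0 0 * y 0) / bB3 0 ∧
    y 4 = -(bB2 1 * y 3 + bB1 1 * y 2 + bB0 1 * y 1) / bB3 1 := by
  have a := hy 0
  have b := hy 1
  have c := (bB3_pos 0 le_rfl).ne'
  have d := (bB3_pos 1 zero_le_one).ne'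
  push_cast at a b
  constructor
  · rw [eq_div_iff c]; linarith
  · rw [eq_div_iff d]; linarith

theorem E_neg_swap (y w : ℕ → ℝ) (n : ℕ) : E y w n = -E w y n := by
  unfold E; ring

/-- `lim (log |ℓ_n|)/n = lim (log |ℓ̃_n|)/n = log μ₂`, where `μ₂` is the (unique) root of
`μ³ + 2368 μ² − 752 μ − 16` lying in the interval `(0.337, 0.338)`. -/
theorem stmt1
    (q p pt : ℕ → ℚ)
    (hq : Rec1 q) (hp : Rec1 p) (hpt : Rec1 pt)
    (hq0 : q 0 = -1) (hq1 : q 1 = 42) (hq2 : q 2 = -17934)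
    (hp0 : p 0 = 0) (hp1 : p 1 = 87/2) (hp2 : p 2 = -1190161/64)
    (hpt0 : pt 0 = 0) (hpt1 : pt 1 = 101/2) (hpt2 : pt 2 = -344923/16)
    (μ2 : ℝ) (hμ2root : μ2^3 + 2368*μ2^2 - 752*μ2 - 16 = 0)
    (hμ2mem : μ2 ∈ Set.Ioo (0.337 : ℝ) 0.338) :
    Tendsto (fun n : ℕ => Real.log |(q n : ℝ) * zetaRe 5 - (p n : ℝ)| / (n : ℝ))
      atTop (nhds (Real.log μ2)) ∧
    Tendsto (fun n : ℕ => Real.log |(q n : ℝ) * zetaRe 3 - (pt n : ℝ)| / (n : ℝ))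
      atTop (nhds (Real.log μ2)) := by
  obtain ⟨u, hu, u0, u1, u2⟩ := exists_sol 2 18 938
  obtain ⟨w, hw, w0, w1, w2⟩ := exists_sol 0 66 (6125/2)
  obtain ⟨v, hv, v0, v1, v2⟩ := exists_sol 0 98 (74463/16)
  obtain ⟨u3, u4⟩ := sol_next hu
  obtain ⟨w3, w4⟩ := sol_next hw
  obtain ⟨v3, v4⟩ := sol_next hv
  rw [u0, u1, u2] at u3
  rw [w0, w1, w2] at w3
  rw [v0, v1, v2] at v3
  norm_num [bB0, bB1, bB2, bB3, cC] at u3 w3 v3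
  rw [u1, u2, u3] at u4
  rw [w1, w2, w3] at w4
  rw [v1, v2, v3] at v4
  norm_num [bB0, bB1, bB2, bB3, cC] at u4 w4 v4
  have hr : ∀ n, r n = u n * zetaRe 5 + w n * zetaRe 3 - v n := by
    intro n
    have hz : RecB (fun n => u n * zetaRe 5 + w n * zetaRe 3 - v n) := by
      intro n
      linear_combination zetaRe 5 * hu n + zetaRe 3 * hw n - hv n
    refine (RecB_unique r_rec hz ?_ ?_ ?_ n).1
    · rw [r_zero]; simp only [u0, w0, v0]; ring
    · rw [r_one]; simp only [u1, w1, v1]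
    · rw [r_two]; simp only [u2, w2, v2]
  have hqE : ∀ n, (q n : ℝ) = E u w n := by
    intro n
    refine (RecA_unique (RecA_cast hq) (E_rec _ _ hu hw) ?_ ?_ ?_ n).1
    · simp only [hq0, E, u0, u1, u2, w0, w1, w2, sS1, sS2, cC]; norm_num
    · simp only [hq1, E, Nat.reduceAdd, u3, u1, u2, w3, w1, w2, sS1, sS2, cC]; norm_num
    · simp only [hq2, E, Nat.reduceAdd, u3, u4, u2, w3, w4, w2, sS1, sS2, cC]; norm_num
  have hpE : ∀ n, (p n : ℝ) = E v w n := by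
    intro n
    refine (RecA_unique (RecA_cast hp) (E_rec _ _ hv hw) ?_ ?_ ?_ n).1
    · simp only [hp0, E, v0, v1, v2, w0, w1, w2, sS1, sS2, cC]; norm_num
    · simp only [hp1, E, Nat.reduceAdd, v3, v1, v2, w3, w1, w2, sS1, sS2, cC]; norm_num
    · simp only [hp2, E, Nat.reduceAdd, v3, v4, v2, w3, w4, w2, sS1, sS2, cC]; norm_num
  have hptE : ∀ n, (pt n : ℝ) = E u v n := by
    intro n
    refine (RecA_unique (RecA_cast hpt) (E_rec _ _ hu hv) ?_ ?_ ?_ n).1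
    · simp only [hpt0, E, v0, v1, v2, u0, u1, u2, sS1, sS2, cC]; norm_num
    · simp only [hpt1, E, Nat.reduceAdd, v3, v1, v2, u3, u1, u2, sS1, sS2, cC]; norm_num
    · simp only [hpt2, E, Nat.reduceAdd, v3, v4, v2, u3, u4, u2, sS1, sS2, cC]; norm_num
  obtain ⟨l, hl0, hl1, hl⟩ := exists_l
  obtain ⟨t, ht0, ht1, ht⟩ := exists_t
  have hμ0 : 0 < μ2 := lt_trans (by norm_num) hμ2mem.1
  have hμ := mu_eq l t μ2 hl0 hl1 hl ht0 ht1 ht hμ0 hμ2root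
  have Lw := E_ratio hw (by rw [w0]) (by rw [w0, w1]; norm_num) (by rw [w1, w2]; norm_num)
    (by rw [w1]; norm_num) l t hl0 hl1 hl ht0 ht1 ht
  have Lu := E_ratio hu (by rw [u0]; norm_num) (by rw [u0, u1]; norm_num)
    (by rw [u1, u2]; norm_num) (by rw [u1]; norm_num) l t hl0 hl1 hl ht0 ht1 ht
  rw [hμ] at Lw Lu
  constructor
  · refine (log_lim hμ0 Lw.1 Lw.2).congr fun n => ?_
    have e : E r w n = (q n : ℝ) * zetaRe 5 - (p n : ℝ) := by
      rw [hqE, hpE]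
      unfold E
      rw [hr n, hr (n+1), hr (n+2)]
      ring
    rw [e]
  · refine (log_lim hμ0 Lu.1 Lu.2).congr fun n => ?_
    have e : E r u n = -((q n : ℝ) * zetaRe 3 - (pt n : ℝ)) := by
      rw [hqE, hptE]
      unfold E
      rw [hr n, hr (n+1), hr (n+2)]
      ring
    rw [e, abs_neg]
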